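/- For all integers n > k ≥ 3 and 2 ≤ s ≤ C(k,2) + 1, one has F⁽²⁾(n; k, s) ≥ C(n,2) / f(n, k, C(k,2) − s + 2). (Indeed, in a (k, C(k,2)−s+2)-coloring of K_n no set of k vertices can contain s edges of the same color, so some color class is a graph with at least C(n,2)/f(n,k,C(k,2)−s+2) edges in which no k vertices induce s edges.) -/

import Mathlib

namespace EG

/-- The set of (non-diagonal) edges inside a vertex set `S`. -/
def edgesOf {V : Type} [DecidableEq V] (S : Finset V) : Finset (Sym2 V) :=
  S.sym2.filter fun e => ¬ e.IsDiag

/-- `c` is a `(p,q)`-coloring of `K_n` (with `k` colors): every set of `p` vertices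
spans edges of at least `q` distinct colors. -/
def IsPQColoring (n p q k : ℕ) (c : Sym2 (Fin n) → Fin k) : Prop :=
  ∀ S : Finset (Fin n), S.card = p → q ≤ ((edgesOf S).image c).card

/-- The generalized Ramsey number `f(n,p,q)`: the minimum number of colors in a
`(p,q)`-coloring of `K_n`. -/
noncomputable def genRamsey (n p q : ℕ) : ℕ :=
  sInf { k | ∃ c : Sym2 (Fin n) → Fin k, IsPQColoring n p q k c }

/-- `F²(n;k,s)`: the smallest number `m` of edges such that every simple graph on `n`
vertices with `m` edges contains `k` vertices inducing at least `s` edges. -/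
noncomputable def F2 (n k s : ℕ) : ℕ :=
  sInf { m | ∀ E : Finset (Sym2 (Fin n)), (∀ e ∈ E, ¬ e.IsDiag) → E.card = m →
    ∃ S : Finset (Fin n), S.card = k ∧ s ≤ (E ∩ S.sym2).card }

/-- The coloring `c` has a monochromatic clique on the vertex set `S`. -/
def IsMonoClique {n k : ℕ} (c : Sym2 (Fin n) → Fin k) (S : Finset (Fin n)) : Prop :=
  ∃ col : Fin k, ∀ e ∈ edgesOf S, c e = col

/-- The `k`-color diagonal Ramsey number `R_k(p)`: the least `n` such that every
`k`-coloring of the edges of `K_n` contains a monochromatic `p`-clique. -/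
noncomputable def multiRamsey (k p : ℕ) : ℕ :=
  sInf { n | ∀ c : Sym2 (Fin n) → Fin k, ∃ S : Finset (Fin n), S.card = p ∧ IsMonoClique c S }

/-!
If `t ≥ 1` of the `C(p,2)` edges inside a `p`-set share a color, the `p`-set sees at most
`C(p,2) - t + 1` colors. Hence a color class of a `(p,q)`-coloring has fewer than `C(p,2) - q + 2`
edges inside every `p`-set, and so fewer than `F²(n; p, C(p,2) - q + 2)` edges in total. Summing
over the color classes of an optimal coloring gives the bound in product form.
-/

theorem card_image_add_card_fiber_le {α β : Type*} [DecidableEq β] (A : Finset α) (f : α → β)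
    (b : β) : (A.image f).card + (A.filter (f · = b)).card ≤ A.card + 1 := by
  have himage : A.image f ⊆ insert b ((A.filter (¬ f · = b)).image f) := by
    intro y hy
    obtain ⟨a, ha, rfl⟩ := Finset.mem_image.1 hy
    by_cases hab : f a = b
    · exact Finset.mem_insert.2 (Or.inl hab)
    · exact Finset.mem_insert_of_mem (Finset.mem_image_of_mem f (Finset.mem_filter.2 ⟨ha, hab⟩))
  calc (A.image f).card + (A.filter (f · = b)).card
      ≤ ((A.filter (¬ f · = b)).image f).card + 1 + (A.filter (f · = b)).card := by
        gcongr
        exact (Finset.card_le_card himage).trans (Finset.card_insert_le _ _)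
    _ ≤ (A.filter (¬ f · = b)).card + 1 + (A.filter (f · = b)).card := by
        gcongr
        exact Finset.card_image_le
    _ = A.card + 1 := by
        rw [← Finset.card_filter_add_card_filter_not (s := A) (f · = b)]
        ring

section Edges

variable {V : Type} [DecidableEq V]

theorem card_edgesOf (S : Finset V) : (edgesOf S).card = S.card.choose 2 := by
  rw [edgesOf, Finset.sym2_eq_image, Sym2.filter_image_mk_not_isDiag, Sym2.card_image_offDiag]

variable [Fintype V] {C : Type*} [DecidableEq C]

/-- The color class of `i` in an edge coloring `c` of the complete graph on `V`. Diagonal elements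
of `Sym2 V`, which `c` also colors, are excluded. -/
def colorClass (c : Sym2 V → C) (i : C) : Finset (Sym2 V) :=
  (edgesOf Finset.univ).filter (c · = i)

theorem not_isDiag_of_mem_colorClass {c : Sym2 V → C} {i : C} {e : Sym2 V}
    (he : e ∈ colorClass c i) : ¬ e.IsDiag :=
  (Finset.mem_filter.1 (Finset.mem_filter.1 he).1).2

theorem colorClass_inter_sym2 (c : Sym2 V → C) (i : C) (S : Finset V) :
    colorClass c i ∩ S.sym2 = (edgesOf S).filter (c · = i) := by
  ext e
  simp only [colorClass, edgesOf, Finset.mem_inter, Finset.mem_filter, Finset.sym2_univ,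
    Finset.mem_univ, true_and]
  tauto

theorem sum_card_colorClass [Fintype C] (c : Sym2 V → C) :
    ∑ i, (colorClass c i).card = (Fintype.card V).choose 2 := by
  rw [← Finset.card_univ (α := V), ← card_edgesOf]
  exact (Finset.card_eq_sum_card_fiberwise fun e _ => Finset.mem_univ (c e)).symm

end Edges

section Extremal

variable {n p q s N : ℕ}

theorem exists_le_card_inter_sym2_of_card_eq_F2 {E : Finset (Sym2 (Fin n))}
    (hE : ∀ e ∈ E, ¬ e.IsDiag) (hcard : E.card = F2 n p s) :
    ∃ S : Finset (Fin n), S.card = p ∧ s ≤ (E ∩ S.sym2).card := by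
  -- The set defining `F2` is nonempty: it contains every number too large to be an edge count.
  refine Nat.sInf_mem (s := {m | ∀ E : Finset (Sym2 (Fin n)), (∀ e ∈ E, ¬ e.IsDiag) →
    E.card = m → ∃ S : Finset (Fin n), S.card = p ∧ s ≤ (E ∩ S.sym2).card}) ?_ E hE hcard
  exact ⟨Fintype.card (Sym2 (Fin n)) + 1, fun E _ hlarge =>
    absurd hlarge (Nat.lt_succ_of_le E.card_le_univ).ne⟩

theorem card_lt_F2 {E : Finset (Sym2 (Fin n))} (hE : ∀ e ∈ E, ¬ e.IsDiag)
    (hsparse : ∀ S : Finset (Fin n), S.card = p → (E ∩ S.sym2).card < s) :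
    E.card < F2 n p s := by
  by_contra! hle
  obtain ⟨E', hsub, hcard⟩ := Finset.exists_subset_card_eq hle
  obtain ⟨S, hS, hdense⟩ :=
    exists_le_card_inter_sym2_of_card_eq_F2 (fun e he => hE e (hsub he)) hcard
  have hmono : (E' ∩ S.sym2).card ≤ (E ∩ S.sym2).card :=
    Finset.card_le_card (Finset.inter_subset_inter_right hsub)
  exact (hdense.trans hmono).not_gt (hsparse S hS)

namespace IsPQColoring

theorem of_injective {c : Sym2 (Fin n) → Fin N} (hc : Function.Injective c)
    (hq : q ≤ p.choose 2) : IsPQColoring n p q N c := by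
  intro S hS
  rwa [Finset.card_image_of_injective _ hc, card_edgesOf, hS]

theorem card_colorClass_inter_sym2_lt {c : Sym2 (Fin n) → Fin N} (hc : IsPQColoring n p q N c)
    (hqs : p.choose 2 + 2 ≤ q + s) (i : Fin N) {S : Finset (Fin n)} (hS : S.card = p) :
    (colorClass c i ∩ S.sym2).card < s := by
  have hcolors : q ≤ ((edgesOf S).image c).card := hc S hS
  have hfiber := card_image_add_card_fiber_le (edgesOf S) c i
  rw [card_edgesOf, hS] at hfiber
  rw [colorClass_inter_sym2]
  omega

theorem card_colorClass_lt_F2 {c : Sym2 (Fin n) → Fin N} (hc : IsPQColoring n p q N c)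
    (hqs : p.choose 2 + 2 ≤ q + s) (i : Fin N) : (colorClass c i).card < F2 n p s :=
  card_lt_F2 (fun _ => not_isDiag_of_mem_colorClass) fun _ =>
    hc.card_colorClass_inter_sym2_lt hqs i

theorem choose_two_le_mul_F2 {c : Sym2 (Fin n) → Fin N} (hc : IsPQColoring n p q N c)
    (hqs : p.choose 2 + 2 ≤ q + s) : n.choose 2 ≤ N * F2 n p s :=
  calc n.choose 2 = ∑ i, (colorClass c i).card := by rw [sum_card_colorClass, Fintype.card_fin]
    _ ≤ ∑ _i : Fin N, F2 n p s := Finset.sum_le_sum fun i _ => (hc.card_colorClass_lt_F2 hqs i).le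
    _ = N * F2 n p s := by rw [Finset.sum_const, Finset.card_univ, Fintype.card_fin, smul_eq_mul]

end IsPQColoring

theorem exists_isPQColoring_genRamsey (n : ℕ) (hq : q ≤ p.choose 2) :
    ∃ c : Sym2 (Fin n) → Fin (genRamsey n p q), IsPQColoring n p q (genRamsey n p q) c :=
  Nat.sInf_mem (s := {N | ∃ c : Sym2 (Fin n) → Fin N, IsPQColoring n p q N c})
    ⟨_, _, IsPQColoring.of_injective (Fintype.equivFin (Sym2 (Fin n))).injective hq⟩

theorem choose_two_le_genRamsey_mul_F2 (n : ℕ) (hq : q ≤ p.choose 2)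
    (hqs : p.choose 2 + 2 ≤ q + s) : n.choose 2 ≤ genRamsey n p q * F2 n p s := by
  obtain ⟨c, hc⟩ := exists_isPQColoring_genRamsey n hq
  exact hc.choose_two_le_mul_F2 hqs

end Extremal

/-- `F²(n;k,s) ≥ C(n,2) / f(n, k, C(k,2) − s + 2)`. -/
theorem F2_ge_choose_div_genRamsey (n k s : ℕ) (hk : 3 ≤ k) (hn : k < n)
    (hs1 : 2 ≤ s) (hs2 : s ≤ k.choose 2 + 1) :
    (n.choose 2 : ℝ) / (genRamsey n k (k.choose 2 + 2 - s) : ℝ) ≤ (F2 n k s : ℝ) := by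
  have hq : k.choose 2 + 2 - s ≤ k.choose 2 := by omega
  have hqs : k.choose 2 + 2 ≤ k.choose 2 + 2 - s + s := by omega
  have hprod := choose_two_le_genRamsey_mul_F2 n hq hqs
  refine div_le_of_le_mul₀ (Nat.cast_nonneg _) (Nat.cast_nonneg _) ?_
  rw [mul_comm]
  exact_mod_cast hprod

end EG
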